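/- Suppose y* ∈ C¹_rd(𝕋;ℝⁿ) is a weak local minimizer of 𝓛 with the left endpoint free: there is δ > 0 such that 𝓛[y*] ≤ 𝓛[y] for every y ∈ C¹_rd(𝕋;ℝⁿ) with y(b) = y*(b) and ‖y − y*‖_{1,∞} < δ (no condition is imposed at t = a). Then the natural boundary condition L_v(a, y*(a), y*^Δ(a)) − μ(a)·L_y(a, y*(a), y*^Δ(a)) = 0 holds. -/

import Mathlib

open Set Filter

noncomputable section

-- Forward jump operator of the set `S`.
open Classical in
def tsSigma (S : Set ℝ) (t : ℝ) : ℝ :=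
  if ({s | s ∈ S ∧ t < s}).Nonempty then sInf {s | s ∈ S ∧ t < s} else t

-- Backward jump operator of the set `S`.
open Classical in
def tsRho (S : Set ℝ) (t : ℝ) : ℝ :=
  if ({s | s ∈ S ∧ s < t}).Nonempty then sSup {s | s ∈ S ∧ s < t} else t

/-- Graininess function. -/
def tsMu (S : Set ℝ) (t : ℝ) : ℝ := tsSigma S t - t

/-- `S^k = S \ (ρ(max S), max S]`. -/
def tsTk (S : Set ℝ) : Set ℝ := S \ Set.Ioc (tsRho S (sSup S)) (sSup S)

/-- Delta differentiability at `t` of `f` regarded as a function on the time scale `S`,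
with delta derivative `d`. -/
def deltaDiffAt {E : Type*} [NormedAddCommGroup E] [NormedSpace ℝ E]
    (S : Set ℝ) (f : ℝ → E) (t : ℝ) (d : E) : Prop :=
  ∀ ε > 0, ∃ δ > 0, ∀ s ∈ S ∩ Set.Ioo (t - δ) (t + δ),
    ‖f (tsSigma S t) - f s - (tsSigma S t - s) • d‖ ≤ ε * |tsSigma S t - s|

/-- rd-continuity of `f` on its domain `S`: continuity (within `S`) at right-dense points and
existence of a finite left-sided limit along `S` at left-dense points. -/
def RdContinuousOn {E : Type*} [NormedAddCommGroup E]
    (S : Set ℝ) (f : ℝ → E) : Prop :=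
  ∀ t ∈ S, (tsSigma S t = t → ContinuousWithinAt f S t) ∧
    (tsRho S t = t → ∃ l : E, Filter.Tendsto f (nhdsWithin t (S ∩ Set.Iio t)) (nhds l))

/-- `y ∈ C¹_rd(T)`, with delta derivative `yd`. -/
def C1rd {E : Type*} [NormedAddCommGroup E] [NormedSpace ℝ E]
    (T : Set ℝ) (y yd : ℝ → E) : Prop :=
  (∀ t ∈ tsTk T, deltaDiffAt T y t (yd t)) ∧ RdContinuousOn (tsTk T) yd

/-- `F` is a delta antiderivative of `f` on the time scale `S`; the delta integral
`∫_c^d f Δt` is `F d - F c` for any such `F`. -/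
def IsDeltaAntideriv {E : Type*} [NormedAddCommGroup E] [NormedSpace ℝ E]
    (S : Set ℝ) (f F : ℝ → E) : Prop :=
  ∀ t ∈ tsTk S, deltaDiffAt S F t (f t)

/-- Sup norm of `f` over the set `S`. -/
def tsSupNorm {E : Type*} [NormedAddCommGroup E] (S : Set ℝ) (f : ℝ → E) : ℝ :=
  sSup ((fun t => ‖f t‖) '' S)

abbrev En (n : ℕ) : Type := EuclideanSpace ℝ (Fin n)

/-! part A: jump operators -/

lemma ts_sigma_ge (S : Set ℝ) (t : ℝ) : t ≤ tsSigma S t := by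
  unfold tsSigma
  split_ifs with h
  · exact le_csInf h (fun s hs => hs.2.le)
  · exact le_rfl

lemma ts_sigma_le {S : Set ℝ} {t s : ℝ} (hs : s ∈ S) (h : t < s) : tsSigma S t ≤ s := by
  unfold tsSigma
  have hne : ({s | s ∈ S ∧ t < s}).Nonempty := ⟨s, hs, h⟩
  rw [if_pos hne]
  exact csInf_le ⟨t, fun x hx => hx.2.le⟩ ⟨hs, h⟩

lemma ts_rho_le (S : Set ℝ) (t : ℝ) : tsRho S t ≤ t := by
  unfold tsRho
  split_ifs with h
  · exact csSup_le h (fun s hs => hs.2.le)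
  · exact le_rfl

lemma ts_le_rho {S : Set ℝ} {t s : ℝ} (hs : s ∈ S) (h : s < t) : s ≤ tsRho S t := by
  unfold tsRho
  have hne : ({s | s ∈ S ∧ s < t}).Nonempty := ⟨s, hs, h⟩
  rw [if_pos hne]
  exact le_csSup ⟨t, fun x hx => hx.2.le⟩ ⟨hs, h⟩

lemma ts_right_dense {S : Set ℝ} {t u : ℝ} (hu : u ∈ S) (htu : t < u) (h : tsSigma S t = t)
    {x : ℝ} (hx : t < x) : ∃ s ∈ S, t < s ∧ s < x := by
  unfold tsSigma at h
  have hne : ({s | s ∈ S ∧ t < s}).Nonempty := ⟨u, hu, htu⟩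
  rw [if_pos hne] at h
  obtain ⟨s, hs, hsx⟩ := exists_lt_of_csInf_lt hne (h.symm ▸ hx)
  exact ⟨s, hs.1, hs.2, hsx⟩

lemma nhds_right_bot {S : Set ℝ} {t : ℝ} (h : tsSigma S t ≠ t ∨ ¬ ({s | s ∈ S ∧ t < s}).Nonempty) :
    nhdsWithin t (S ∩ Ioi t) = ⊥ := by
  rcases h with h | h
  · have h1 : t < tsSigma S t := lt_of_le_of_ne (ts_sigma_ge S t) (Ne.symm h)
    rw [← Filter.empty_mem_iff_bot, mem_nhdsWithin]
    refine ⟨Iio (tsSigma S t), isOpen_Iio, h1, ?_⟩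
    rintro x ⟨hx, hxS, hxt⟩
    exact absurd (ts_sigma_le hxS hxt) (not_le.2 hx)
  · have : S ∩ Ioi t = ∅ := by
      ext x
      constructor
      · intro hx
        exact (h ⟨x, hx⟩).elim
      · simp
    rw [this, nhdsWithin_empty]

lemma nhds_left_bot {S : Set ℝ} {t : ℝ} (h : tsRho S t ≠ t) :
    nhdsWithin t (S ∩ Iio t) = ⊥ := by
  have h1 : tsRho S t < t := lt_of_le_of_ne (ts_rho_le S t) h
  rw [← Filter.empty_mem_iff_bot, mem_nhdsWithin]
  refine ⟨Ioi (tsRho S t), isOpen_Ioi, h1, ?_⟩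
  rintro x ⟨hx, hxS, hxt⟩
  exact absurd (ts_le_rho hxS hxt) (not_le.2 hx)

def RegOn {E : Type*} [NormedAddCommGroup E] (S : Set ℝ) (f : ℝ → E) : Prop :=
  ∀ t ∈ S, Tendsto f (nhdsWithin t (S ∩ Ioi t)) (nhds (f t)) ∧
    ∃ l : E, Tendsto f (nhdsWithin t (S ∩ Iio t)) (nhds l)

lemma RdContinuousOn.regOn {E : Type*} [NormedAddCommGroup E] {S : Set ℝ} {f : ℝ → E}
    (h : RdContinuousOn S f) : RegOn S f := by
  intro t ht
  constructor
  · by_cases h1 : tsSigma S t = t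
    · exact ((h t ht).1 h1).mono_left (nhdsWithin_mono _ inter_subset_left)
    · rw [nhds_right_bot (Or.inl h1)]; exact tendsto_bot
  · by_cases h1 : tsRho S t = t
    · exact (h t ht).2 h1
    · rw [nhds_left_bot h1]; exact ⟨0, tendsto_bot⟩

structure TS (T : Set ℝ) (a b : ℝ) : Prop where
  closed : IsClosed T
  ha : a ∈ T
  hb : b ∈ T
  hab : a < b
  sub : T ⊆ Icc a b

lemma TS.sSup_eq {T : Set ℝ} {a b : ℝ} (h : TS T a b) : sSup T = b :=
  IsGreatest.csSup_eq ⟨h.hb, fun _ hx => (h.sub hx).2⟩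

lemma tk_sub (T : Set ℝ) : tsTk T ⊆ T := fun _ hx => hx.1

lemma TS.mem_tk {T : Set ℝ} {a b : ℝ} (h : TS T a b) {t : ℝ} (ht : t ∈ T) (htb : t < b) :
    t ∈ tsTk T := by
  refine ⟨ht, ?_⟩
  rw [h.sSup_eq]
  intro hx
  exact absurd (ts_le_rho ht htb) (not_le.2 hx.1)

lemma TS.rho_ne {T : Set ℝ} {a b : ℝ} (h : TS T a b) (hbk : b ∉ tsTk T) : tsRho T b ≠ b := by
  intro h1
  apply hbk
  refine ⟨h.hb, ?_⟩
  rw [h.sSup_eq, h1]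
  simp

lemma TS.sigma_tk {T : Set ℝ} {a b : ℝ} (h : TS T a b) {t : ℝ} (ht : t ∈ tsTk T)
    (hs : tsSigma T t = t) : tsSigma (tsTk T) t = t := by
  refine le_antisymm ?_ (ts_sigma_ge _ _)
  rcases (h.sub ht.1).2.lt_or_eq with htb | htb
  · refine le_of_forall_gt fun x hx => ?_
    obtain ⟨s, hsT, h1, h2⟩ := ts_right_dense h.hb htb hs (lt_min hx htb)
    exact (ts_sigma_le (h.mem_tk hsT (h2.trans_le (min_le_right _ _))) h1).trans_lt
      (h2.trans_le (min_le_left _ _))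
  · unfold tsSigma
    rw [if_neg]
    rintro ⟨s, hs1, hs2⟩
    have := (h.sub hs1.1).2
    linarith

lemma TS.reg_T {E : Type*} [NormedAddCommGroup E] {T : Set ℝ} {a b : ℝ} (h : TS T a b)
    {f : ℝ → E} (hf : RegOn (tsTk T) f) : RegOn T f := by
  intro t ht
  have hleft : ∀ x ∈ T ∩ Iio t, x ∈ tsTk T ∩ Iio t := fun x hx =>
    ⟨h.mem_tk hx.1 (lt_of_lt_of_le hx.2 (h.sub ht).2), hx.2⟩
  by_cases htk : t ∈ tsTk T
  · obtain ⟨h1, l, h2⟩ := hf t htk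
    refine ⟨?_, l, h2.mono_left (nhdsWithin_mono _ hleft)⟩
    rcases (h.sub ht).2.lt_or_eq with htb | htb
    · refine h1.mono_left ?_
      refine nhdsWithin_le_iff.2 ?_
      rw [mem_nhdsWithin]
      exact ⟨Iio b, isOpen_Iio, htb, fun x hx => ⟨h.mem_tk hx.2.1 hx.1, hx.2.2⟩⟩
    · rw [nhds_right_bot]
      · exact tendsto_bot
      · right
        rintro ⟨s, hs1, hs2⟩
        have := (h.sub hs1).2
        linarith
  · have htb : t = b := by
      rcases (h.sub ht).2.lt_or_eq with htb | htb
      · exact (htk (h.mem_tk ht htb)).elim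
      · exact htb
    subst htb
    rw [nhds_left_bot (h.rho_ne htk), nhds_right_bot]
    · exact ⟨tendsto_bot, 0, tendsto_bot⟩
    · right
      rintro ⟨s, hs1, hs2⟩
      have := (h.sub hs1).2
      linarith

lemma TS.bdd {E : Type*} [NormedAddCommGroup E] {T : Set ℝ} {a b : ℝ} (h : TS T a b)
    {f : ℝ → E} (hf : RegOn T f) : ∃ M, ∀ t ∈ T, ‖f t‖ ≤ M := by
  have hc : IsCompact T := isCompact_Icc.of_isClosed_subset h.closed h.sub
  refine hc.induction_on (p := fun s => ∃ M, ∀ t ∈ s, ‖f t‖ ≤ M) ?_ ?_ ?_ ?_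
  · exact ⟨0, by simp⟩
  · rintro s t hst ⟨M, hM⟩
    exact ⟨M, fun x hx => hM x (hst hx)⟩
  · rintro s t ⟨M, hM⟩ ⟨N, hN⟩
    refine ⟨max M N, ?_⟩
    rintro x (hx | hx)
    · exact (hM x hx).trans (le_max_left _ _)
    · exact (hN x hx).trans (le_max_right _ _)
  · intro t ht
    obtain ⟨h1, l, h2⟩ := hf t ht
    have e1 := h1.norm.eventually (eventually_le_nhds (lt_add_one ‖f t‖))
    have e2 := h2.norm.eventually (eventually_le_nhds (lt_add_one ‖l‖))
    rw [eventually_nhdsWithin_iff] at e1 e2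
    refine ⟨{x | x ∈ T ∧ ‖f x‖ ≤ max (‖f t‖ + 1) (‖l‖ + 1)}, ?_, _, fun x hx => hx.2⟩
    have : ∀ᶠ x in nhdsWithin t T, x ∈ T ∧ ‖f x‖ ≤ max (‖f t‖ + 1) (‖l‖ + 1) := by
      rw [eventually_nhdsWithin_iff]
      filter_upwards [e1, e2] with x hx1 hx2 hxT
      refine ⟨hxT, ?_⟩
      rcases lt_trichotomy x t with hh | hh | hh
      · exact (hx2 ⟨hxT, hh⟩).trans (le_max_right _ _)
      · subst hh
        exact le_trans (by linarith) (le_max_left _ _)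
      · exact (hx1 ⟨hxT, hh⟩).trans (le_max_left _ _)
    exact this

/-! projection -/
def tsPi (T : Set ℝ) (r : ℝ) : ℝ := sSup (T ∩ Iic r)

lemma TS.pi_mem {T : Set ℝ} {a b : ℝ} (h : TS T a b) {r : ℝ} (hr : a ≤ r) :
    tsPi T r ∈ T ∩ Iic r :=
  (h.closed.inter isClosed_Iic).csSup_mem ⟨a, h.ha, hr⟩ ⟨r, fun _ hx => hx.2⟩

lemma le_tsPi {T : Set ℝ} {t r : ℝ} (ht : t ∈ T) (htr : t ≤ r) : t ≤ tsPi T r :=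
  le_csSup ⟨r, fun _ hx => hx.2⟩ ⟨ht, htr⟩

lemma TS.pi_self {T : Set ℝ} {a b : ℝ} (h : TS T a b) {t : ℝ} (ht : t ∈ T) : tsPi T t = t :=
  le_antisymm (h.pi_mem (h.sub ht).1).2 (le_tsPi ht le_rfl)

lemma TS.pi_gap {T : Set ℝ} {a b : ℝ} (h : TS T a b) {t r : ℝ} (ht : t ∈ T) (htr : t ≤ r)
    (hr : r < tsSigma T t) : tsPi T r = t := by
  refine le_antisymm ?_ (le_tsPi ht htr)
  by_contra hc
  push Not at hc
  have hm := h.pi_mem ((h.sub ht).1.trans htr)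
  have := ts_sigma_le hm.1 hc
  have := hm.2
  simp only [mem_Iic] at this
  linarith

lemma measurable_of_right {g : ℝ → ℝ} (hg : ∀ r, Tendsto g (nhdsWithin r (Ioi r)) (nhds (g r))) :
    Measurable g := by
  have key : ∀ x : ℝ, Tendsto (fun n : ℕ => ((⌊((n : ℝ) + 1) * x⌋ : ℝ) + 1) / ((n : ℝ) + 1)) atTop
      (nhdsWithin x (Ioi x)) := by
    intro x
    rw [tendsto_nhdsWithin_iff]
    have hlow : ∀ n : ℕ, x < ((⌊((n : ℝ) + 1) * x⌋ : ℝ) + 1) / ((n : ℝ) + 1) := by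
      intro n
      rw [lt_div_iff₀ (by positivity)]
      have := Int.lt_floor_add_one (((n : ℝ) + 1) * x)
      linarith
    refine ⟨?_, Eventually.of_forall hlow⟩
    have hup : ∀ n : ℕ, ((⌊((n : ℝ) + 1) * x⌋ : ℝ) + 1) / ((n : ℝ) + 1) ≤ x + 1 / ((n : ℝ) + 1) := by
      intro n
      rw [add_div]
      gcongr
      rw [div_le_iff₀ (by positivity)]
      have := Int.floor_le (((n : ℝ) + 1) * x)
      linarith
    refine tendsto_of_tendsto_of_tendsto_of_le_of_le tendsto_const_nhds ?_ (fun n => (hlow n).le) hup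
    simpa using (tendsto_const_nhds (x := x)).add tendsto_one_div_add_atTop_nhds_zero_nat
  refine measurable_of_tendsto_metrizable
    (f := fun (n : ℕ) x => g (((⌊((n : ℝ) + 1) * x⌋ : ℝ) + 1) / ((n : ℝ) + 1))) ?_ ?_
  · intro n
    have h1 : Measurable (fun k : ℤ => g (((k : ℝ) + 1) / ((n : ℝ) + 1))) := measurable_from_top
    have h2 : Measurable (fun x : ℝ => ⌊((n : ℝ) + 1) * x⌋) :=
      Int.measurable_floor.comp (measurable_const.mul measurable_id)
    exact h1.comp h2
  · rw [tendsto_pi_nhds]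
    intro x
    exact (hg x).comp (key x)

lemma TS.right_cont {T : Set ℝ} {a b : ℝ} (h : TS T a b) {f : ℝ → ℝ} (hf : RegOn T f) (r : ℝ) :
    Tendsto (fun x => f (tsPi T x)) (nhdsWithin r (Ioi r)) (nhds (f (tsPi T r))) := by
  by_cases hgap : ∃ δ > 0, ∀ x ∈ T, r < x → r + δ ≤ x
  · obtain ⟨δ, hδ, hx⟩ := hgap
    refine tendsto_const_nhds.congr' ?_
    have : ∀ᶠ x in nhdsWithin r (Ioi r), x ∈ Ioo r (r + δ) := Ioo_mem_nhdsGT (by linarith)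
    filter_upwards [this] with x hxx
    have : T ∩ Iic x = T ∩ Iic r := by
      ext z
      simp only [mem_inter_iff, mem_Iic]
      constructor
      · rintro ⟨hz, hzx⟩
        refine ⟨hz, ?_⟩
        by_contra hc
        have := hx z hz (not_le.1 hc)
        linarith [hxx.2]
      · rintro ⟨hz, hzx⟩
        exact ⟨hz, hzx.trans hxx.1.le⟩
    unfold tsPi
    rw [this]
  · push Not at hgap
    have hrT : r ∈ T := by
      rw [← h.closed.closure_eq, Metric.mem_closure_iff]
      intro ε hε
      obtain ⟨x, hx, h1, h2⟩ := hgap ε hε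
      refine ⟨x, hx, ?_⟩
      rw [Real.dist_eq, abs_lt]
      constructor <;> linarith
    rw [h.pi_self hrT]
    have h1 := (hf r hrT).1
    rw [Metric.tendsto_nhdsWithin_nhds] at h1 ⊢
    intro ε hε
    obtain ⟨δ, hδ, hd⟩ := h1 ε hε
    refine ⟨δ, hδ, fun {x} hx hxd => ?_⟩
    have hrx : r ≤ x := le_of_lt hx
    have hm := h.pi_mem ((h.sub hrT).1.trans hrx)
    have hge := le_tsPi hrT hrx
    rcases hge.eq_or_lt with he | hlt
    · rw [← he]; simpa using hε
    · refine hd ⟨hm.1, hlt⟩ ?_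
      have := hm.2
      simp only [mem_Iic] at this
      rw [Real.dist_eq, abs_lt] at hxd ⊢
      constructor <;> linarith [hxd.1, hxd.2]

lemma TS.intble {T : Set ℝ} {a b : ℝ} (h : TS T a b) {f : ℝ → ℝ} (hf : RegOn T f) {x y : ℝ}
    (hx : a ≤ x) (hy : a ≤ y) :
    IntervalIntegrable (fun r => f (tsPi T r)) MeasureTheory.volume x y := by
  obtain ⟨M, hM⟩ := h.bdd hf
  have hmeas := measurable_of_right (h.right_cont hf)
  rw [intervalIntegrable_iff]
  refine MeasureTheory.Measure.integrableOn_of_bounded (M := M) ?_ hmeas.aestronglyMeasurable ?_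
  · simp [uIoc]
  · refine (MeasureTheory.ae_restrict_iff' measurableSet_uIoc).2 (Eventually.of_forall ?_)
    intro r hr
    have : a ≤ r := by
      rw [uIoc, mem_Ioc] at hr
      exact (le_min hx hy).trans hr.1.le
    exact hM _ (h.pi_mem this).1

lemma TS.antideriv {T : Set ℝ} {a b : ℝ} (h : TS T a b) {f : ℝ → ℝ}
    (hf : RdContinuousOn (tsTk T) f) :
    IsDeltaAntideriv T f (fun t => ∫ r in a..t, f (tsPi T r)) := by
  intro t ht ε hε
  have hreg := h.reg_T hf.regOn
  have hint : ∀ {x y : ℝ}, a ≤ x → a ≤ y →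
    IntervalIntegrable (fun r => f (tsPi T r)) MeasureTheory.volume x y := h.intble hreg
  have hat := (h.sub ht.1).1
  have hσ := ts_sigma_ge T t
  have hdiff : ∀ s ∈ T, (∫ r in a..tsSigma T t, f (tsPi T r)) - (∫ r in a..s, f (tsPi T r))
      - (tsSigma T t - s) • f t = ∫ r in s..tsSigma T t, (f (tsPi T r) - f t) := by
    intro s hs
    have has := (h.sub hs).1
    rw [intervalIntegral.integral_sub (hint has (hat.trans hσ)) intervalIntegrable_const,
      intervalIntegral.integral_const,
      intervalIntegral.integral_interval_sub_left (hint le_rfl (hat.trans hσ)) (hint le_rfl has)]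
  rcases hσ.eq_or_lt with he | hlt
  · have hc := (hf t ht).1 (h.sigma_tk ht he.symm)
    have hc' : ContinuousWithinAt f T t := by
      rcases (h.sub ht.1).2.lt_or_eq with htb | htb
      · refine hc.mono_of_mem_nhdsWithin ?_
        rw [mem_nhdsWithin]
        exact ⟨Iio b, isOpen_Iio, htb, fun x hx => h.mem_tk hx.2 hx.1⟩
      · refine hc.mono fun x hx => ?_
        rcases (h.sub hx).2.lt_or_eq with hxb | hxb
        · exact h.mem_tk hx hxb
        · rw [hxb, ← htb]; exact ht
    rw [Metric.continuousWithinAt_iff] at hc'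
    obtain ⟨δ, hδ, hd⟩ := hc' ε hε
    refine ⟨δ, hδ, ?_⟩
    rintro s ⟨hs, hs2⟩
    rw [hdiff s hs, ← he]
    refine intervalIntegral.norm_integral_le_of_norm_le_const fun r hr => ?_
    rw [uIoc, mem_Ioc] at hr
    have has := (h.sub hs).1
    have har : a ≤ r := (le_min has hat).trans hr.1.le
    have hm := h.pi_mem har
    have hm2 : tsPi T r ≤ r := hm.2
    rw [← dist_eq_norm]
    refine (hd hm.1 ?_).le
    rw [Real.dist_eq, abs_lt]
    rcases le_total s t with hst | hst
    · rw [min_eq_left hst, max_eq_right hst] at hr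
      have := le_tsPi hs hr.1.le
      constructor <;> linarith [hs2.1, hs2.2]
    · rw [min_eq_right hst, max_eq_left hst] at hr
      have := le_tsPi ht.1 hr.1.le
      constructor <;> linarith [hs2.1, hs2.2]
  · obtain ⟨M, hM⟩ := h.bdd hreg
    have hM0 : 0 ≤ M := (norm_nonneg _).trans (hM t ht.1)
    set m := tsSigma T t - t with hm
    have hmpos : 0 < m := by linarith
    refine ⟨min (m / 2) (ε * m / (4 * M + 4)), by positivity, ?_⟩
    rintro s ⟨hs, hs2⟩
    have has := (h.sub hs).1
    rw [hdiff s hs]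
    have hi : ∀ {x y : ℝ}, a ≤ x → a ≤ y →
        IntervalIntegrable (fun r => f (tsPi T r) - f t) MeasureTheory.volume x y :=
      fun hx hy => (hint hx hy).sub intervalIntegrable_const
    rw [← intervalIntegral.integral_add_adjacent_intervals (hi has hat) (hi hat (hat.trans hσ))]
    have hz : ∫ r in t..tsSigma T t, (f (tsPi T r) - f t) = 0 := by
      apply intervalIntegral.integral_zero_ae
      have : ∀ᵐ x : ℝ, x ≠ tsSigma T t := by
        simp [MeasureTheory.ae_iff]
      filter_upwards [this] with r hr hrr
      rw [uIoc_of_le hσ] at hrr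
      rw [h.pi_gap ht.1 hrr.1.le (lt_of_le_of_ne hrr.2 hr), sub_self]
    rw [hz, add_zero]
    have hb1 : ‖∫ r in s..t, (f (tsPi T r) - f t)‖ ≤ (2 * M) * |t - s| := by
      refine intervalIntegral.norm_integral_le_of_norm_le_const fun r hr => ?_
      rw [uIoc, mem_Ioc] at hr
      have har : a ≤ r := (le_min has hat).trans hr.1.le
      have := hM _ (h.pi_mem har).1
      have := hM _ ht.1
      exact (norm_sub_le _ _).trans (by linarith)
    have hts : |t - s| < min (m / 2) (ε * m / (4 * M + 4)) := by
      rw [abs_lt]; constructor <;> linarith [hs2.1, hs2.2]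
    obtain ⟨h1, h2⟩ := lt_min_iff.1 hts
    rw [lt_div_iff₀ (by positivity)] at h2
    have h3 : m / 2 ≤ |tsSigma T t - s| := by
      have := le_abs_self (tsSigma T t - s)
      have := neg_abs_le (t - s)
      linarith
    have h4 : ε * (m / 2) ≤ ε * |tsSigma T t - s| := by gcongr
    have := abs_nonneg (t - s)
    nlinarith

/-! part B: variations -/

lemma deltaDiffAt.add_smul {E : Type*} [NormedAddCommGroup E] [NormedSpace ℝ E] {S : Set ℝ}
    {f : ℝ → E} {d : E} {g : ℝ → ℝ} {e : ℝ} {t : ℝ} (hf : deltaDiffAt S f t d)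
    (hg : deltaDiffAt S g t e) (ξ : E) :
    deltaDiffAt S (fun x => f x + g x • ξ) t (d + e • ξ) := by
  intro ε hε
  obtain ⟨δ₁, hδ₁, h1⟩ := hf (ε / 2) (by positivity)
  obtain ⟨δ₂, hδ₂, h2⟩ := hg (ε / 2 / (‖ξ‖ + 1)) (by positivity)
  refine ⟨min δ₁ δ₂, by positivity, ?_⟩
  rintro s ⟨hs, hs1, hs2⟩
  have h1 := h1 s ⟨hs, by linarith [min_le_left δ₁ δ₂], by linarith [min_le_left δ₁ δ₂]⟩
  have h2 := h2 s ⟨hs, by linarith [min_le_right δ₁ δ₂], by linarith [min_le_right δ₁ δ₂]⟩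
  have e1 : f (tsSigma S t) + g (tsSigma S t) • ξ - (f s + g s • ξ) - (tsSigma S t - s) • (d + e • ξ)
      = (f (tsSigma S t) - f s - (tsSigma S t - s) • d)
        + (g (tsSigma S t) - g s - (tsSigma S t - s) • e) • ξ := by
    simp only [smul_eq_mul]
    module
  rw [e1]
  have h3 : ‖(g (tsSigma S t) - g s - (tsSigma S t - s) • e) • ξ‖ ≤ ε / 2 * |tsSigma S t - s| := by
    rw [norm_smul]
    calc _ ≤ (ε / 2 / (‖ξ‖ + 1) * |tsSigma S t - s|) * (‖ξ‖ + 1) := by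
            gcongr
            linarith
      _ = _ := by field_simp
  calc _ ≤ _ := norm_add_le _ _
    _ ≤ ε * |tsSigma S t - s| := by linarith

lemma deltaDiffAt.cont {E : Type*} [NormedAddCommGroup E] [NormedSpace ℝ E] {S : Set ℝ}
    {f : ℝ → E} {d : E} {t : ℝ} (ht : t ∈ S) (hf : deltaDiffAt S f t d) :
    ContinuousWithinAt f S t := by
  set σ := tsSigma S t with hσ
  have key : ∀ ε > 0, ∃ δ > 0, ∀ s ∈ S ∩ Ioo (t - δ) (t + δ),
      ‖f s - f t‖ ≤ |t - s| * ‖d‖ + ε * (2 * |σ - t| + |t - s|) := by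
    intro ε hε
    obtain ⟨δ, hδ, h1⟩ := hf ε hε
    refine ⟨δ, hδ, fun s hs => ?_⟩
    have h2 := h1 s hs
    have h3 := h1 t ⟨ht, by linarith, by linarith⟩
    rw [← hσ] at h2 h3
    have e1 : f s - f t = (f σ - f t - (σ - t) • d) - (f σ - f s - (σ - s) • d) - (t - s) • d := by
      module
    have h4 : |σ - s| ≤ |σ - t| + |t - s| := abs_sub_le _ _ _
    have h5 : ε * |σ - s| ≤ ε * (|σ - t| + |t - s|) := by gcongr
    rw [e1]
    refine (norm_sub_le _ _).trans ?_
    rw [norm_smul, Real.norm_eq_abs]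
    have := norm_sub_le (f σ - f t - (σ - t) • d) (f σ - f s - (σ - s) • d)
    linarith
  rw [Metric.continuousWithinAt_iff]
  intro ε hε
  have hK : 0 < 2 * |σ - t| + 1 := by positivity
  obtain ⟨δ, hδ, h1⟩ := key (ε / 4 / (2 * |σ - t| + 1)) (by positivity)
  refine ⟨min δ (min 1 (ε / 4 / (‖d‖ + 1))), by positivity, fun {s} hs hd => ?_⟩
  rw [Real.dist_eq] at hd
  obtain ⟨hd1, hd2⟩ := lt_min_iff.1 hd
  obtain ⟨hd2, hd3⟩ := lt_min_iff.1 hd2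
  have h2 := h1 s ⟨hs, by linarith [(abs_lt.1 hd1).1], by linarith [(abs_lt.1 hd1).2]⟩
  rw [dist_eq_norm]
  rw [abs_sub_comm] at hd2 hd3
  have h3 : |t - s| * ‖d‖ ≤ ε / 4 := by
    rw [lt_div_iff₀ (by positivity)] at hd3
    nlinarith [abs_nonneg (t - s), norm_nonneg d]
  have h4 : ε / 4 / (2 * |σ - t| + 1) * (2 * |σ - t| + |t - s|) ≤ ε / 4 := by
    calc _ ≤ ε / 4 / (2 * |σ - t| + 1) * (2 * |σ - t| + 1) := by gcongr
      _ = _ := by field_simp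
  linarith

def vm (c x : ℝ) : ℝ := max (c - x) 0
def ve (c x : ℝ) : ℝ := (vm c x) ^ 2
def ved (T : Set ℝ) (c x : ℝ) : ℝ := -(vm c x + vm c (tsSigma T x))

lemma vm_of_le {c x : ℝ} (h : x ≤ c) : vm c x = c - x := max_eq_left (by linarith)
lemma vm_of_ge {c x : ℝ} (h : c ≤ x) : vm c x = 0 := max_eq_right (by linarith)
lemma vm_nonneg (c x : ℝ) : 0 ≤ vm c x := le_max_right _ _
lemma vm_anti (c : ℝ) {x y : ℝ} (h : x ≤ y) : vm c y ≤ vm c x :=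
  max_le_max (by linarith) le_rfl
lemma vm_cont (c : ℝ) : Continuous (vm c) := by unfold vm; fun_prop

lemma ve_delta {T : Set ℝ} {c : ℝ} (hc : c ∈ T) (t : ℝ) : deltaDiffAt T (ve c) t (ved T c t) := by
  intro ε hε
  have hσ := ts_sigma_ge T t
  rcases lt_or_ge t c with htc | htc
  · have hσc := ts_sigma_le hc htc
    refine ⟨min ε (c - t), lt_min hε (by linarith), ?_⟩
    rintro s ⟨hs, hs1, hs2⟩
    have hsc : s ≤ c := by linarith [min_le_right ε (c - t)]
    unfold ve ved
    rw [vm_of_le hσc, vm_of_le hsc, vm_of_le htc.le]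
    have : (c - tsSigma T t) ^ 2 - (c - s) ^ 2 - (tsSigma T t - s) • -(c - t + (c - tsSigma T t))
      = (s - t) * (tsSigma T t - s) := by simp only [smul_eq_mul]; ring
    rw [this, norm_mul, Real.norm_eq_abs, Real.norm_eq_abs]
    gcongr
    rw [abs_le]
    constructor <;> linarith [min_le_left ε (c - t)]
  · refine ⟨ε, hε, ?_⟩
    rintro s ⟨hs, hs1, hs2⟩
    unfold ve ved
    rw [vm_of_ge (htc.trans hσ), vm_of_ge htc]
    rcases lt_or_ge s c with hsc | hsc
    · rw [vm_of_le hsc.le]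
      have : (0:ℝ) ^ 2 - (c - s) ^ 2 - (tsSigma T t - s) • -(0 + 0 : ℝ) = - (c - s) ^ 2 := by simp
      rw [this, norm_neg, Real.norm_of_nonneg (sq_nonneg _), abs_of_nonneg (by linarith), sq]
      have h1 : c - s ≤ ε := by linarith
      have h2 : c - s ≤ tsSigma T t - s := by linarith
      exact mul_le_mul h1 h2 (by linarith) hε.le
    · rw [vm_of_ge hsc]
      simp
      positivity

lemma TS.ved_rd {T : Set ℝ} {a b c : ℝ} (h : TS T a b) (hc : c ∈ T) (hcb : c < b) :
    RdContinuousOn (tsTk T) (ved T c) := by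
  have hleft : ∀ t ∈ T, Tendsto (fun x => vm c (tsSigma T x)) (nhdsWithin t (T ∩ Iio t))
      (nhds (vm c t)) := by
    intro t ht
    refine (vm_cont c).continuousAt.tendsto.comp ?_
    refine tendsto_of_tendsto_of_tendsto_of_le_of_le'
      (g := fun x => x) (h := fun _ => t) (tendsto_id.mono_left nhdsWithin_le_nhds)
      tendsto_const_nhds ?_ ?_
    · exact Eventually.of_forall fun x => ts_sigma_ge T x
    · filter_upwards [self_mem_nhdsWithin] with x hx
      exact ts_sigma_le ht hx.2
  intro t ht
  constructor
  · intro hst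
    have hval : vm c (tsSigma T t) = vm c t := by
      rcases lt_or_ge t c with htc | htc
      · congr 1
        refine le_antisymm ?_ (ts_sigma_ge _ _)
        refine le_of_forall_gt fun x hx => ?_
        obtain ⟨s, hsT, h1, h2⟩ := ts_right_dense (h.mem_tk hc hcb) htc hst hx
        exact (ts_sigma_le hsT.1 h1).trans_lt h2
      · rw [vm_of_ge htc, vm_of_ge (htc.trans (ts_sigma_ge _ _))]
    have hc1 : ContinuousWithinAt (fun x => vm c (tsSigma T x)) (tsTk T) t := by
      have hr : Tendsto (fun x => vm c (tsSigma T x)) (nhdsWithin t (tsTk T ∩ Ioi t))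
          (nhds (vm c t)) := by
        rcases lt_or_ge t c with htc | htc
        · refine (vm_cont c).continuousAt.tendsto.comp ?_
          rw [tendsto_order]
          constructor
          · intro y hy
            filter_upwards [self_mem_nhdsWithin] with x hx
            exact hy.trans (lt_of_lt_of_le hx.2 (ts_sigma_ge _ _))
          · intro y hy
            obtain ⟨s, hsT, h1, h2⟩ := ts_right_dense (h.mem_tk hc hcb) htc hst hy
            filter_upwards [mem_nhdsWithin_of_mem_nhds (Iio_mem_nhds h1)] with x hx
            exact (ts_sigma_le hsT.1 hx).trans_lt h2
        · refine tendsto_const_nhds.congr' ?_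
          filter_upwards [self_mem_nhdsWithin] with x hx
          have : t < x := hx.2
          rw [vm_of_ge htc, vm_of_ge (by linarith [ts_sigma_ge T x])]
      have hl : Tendsto (fun x => vm c (tsSigma T x)) (nhdsWithin t (tsTk T ∩ Iio t))
          (nhds (vm c t)) :=
        (hleft t ht.1).mono_left (nhdsWithin_mono _ (inter_subset_inter_left _ (tk_sub T)))
      change Tendsto _ _ (nhds (vm c (tsSigma T t)))
      rw [hval]
      rw [tendsto_def]
      intro s hs
      have h1 := hl hs
      have h2 := hr hs
      have h3 : vm c t ∈ s := mem_of_mem_nhds hs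
      rw [mem_map, mem_nhdsWithin_iff_eventually] at h1 h2
      rw [mem_nhdsWithin_iff_eventually]
      filter_upwards [h1, h2] with x hx1 hx2 hxT
      rcases lt_trichotomy x t with hh | hh | hh
      · exact hx1 ⟨hxT, hh⟩
      · rw [mem_preimage, hh, hval]; exact h3
      · exact hx2 ⟨hxT, hh⟩
    exact ((vm_cont c).continuousWithinAt.add hc1).neg
  · intro _
    refine ⟨-(vm c t + vm c t), ?_⟩
    refine (Tendsto.add ?_ ?_).neg
    · exact (vm_cont c).continuousWithinAt
    · exact (hleft t ht.1).mono_left (nhdsWithin_mono _ (inter_subset_inter_left _ (tk_sub T)))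

lemma RdContinuousOn.add_smul {E : Type*} [NormedAddCommGroup E] [NormedSpace ℝ E] {S : Set ℝ}
    {f : ℝ → E} {g : ℝ → ℝ} (hf : RdContinuousOn S f) (hg : RdContinuousOn S g) (ξ : E) :
    RdContinuousOn S (fun x => f x + g x • ξ) := by
  intro t ht
  refine ⟨fun h => ((hf t ht).1 h).add (((hg t ht).1 h).smul continuousWithinAt_const), fun h => ?_⟩
  obtain ⟨l, hl⟩ := (hf t ht).2 h
  obtain ⟨m, hm⟩ := (hg t ht).2 h
  exact ⟨_, hl.add (hm.smul tendsto_const_nhds)⟩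

lemma C1rd.comp_rd {n : ℕ} {T : Set ℝ} {L : ℝ → En n → En n → ℝ} {y yd : ℝ → En n}
    (hL : ContinuousOn (fun p : ℝ × En n × En n => L p.1 p.2.1 p.2.2)
      (T ×ˢ (univ : Set (En n × En n)))) (hy : C1rd T y yd) :
    RdContinuousOn (tsTk T) (fun t => L t (y t) (yd t)) := by
  intro t ht
  have hyc : ContinuousWithinAt y (tsTk T) t := ((hy.1 t ht).cont ht.1).mono (tk_sub T)
  have key : ∀ (A : Set ℝ) (l : En n), A ⊆ tsTk T → Tendsto yd (nhdsWithin t A) (nhds l) →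
      Tendsto (fun t => L t (y t) (yd t)) (nhdsWithin t A) (nhds (L t (y t) l)) := by
    intro A l hA hl
    have h1 := hL (t, y t, l) ⟨ht.1, mem_univ _⟩
    refine Tendsto.comp (g := fun p : ℝ × En n × En n => L p.1 p.2.1 p.2.2)
      (f := fun x => (x, y x, yd x)) h1 ?_
    rw [tendsto_nhdsWithin_iff]
    constructor
    · refine Tendsto.prodMk_nhds (tendsto_id.mono_left nhdsWithin_le_nhds) (Tendsto.prodMk_nhds ?_ hl)
      exact hyc.mono_left (nhdsWithin_mono _ hA)
    · filter_upwards [self_mem_nhdsWithin] with x hx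
      exact ⟨(hA hx).1, mem_univ _⟩
  refine ⟨fun h => key _ _ subset_rfl ((hy.2 t ht).1 h), fun h => ?_⟩
  obtain ⟨l, hl⟩ := (hy.2 t ht).2 h
  exact ⟨_, key _ l inter_subset_left hl⟩

lemma grad_mvt {n : ℕ} {f : En n → ℝ} {g : En n → En n} (hf : ∀ y, HasGradientAt f (g y) y)
    (y u : En n) : ∃ p, ‖p - y‖ ≤ ‖u‖ ∧ f (y + u) - f y = inner ℝ (g p) u := by
  have hd : ∀ θ : ℝ, HasDerivAt (fun θ : ℝ => f (y + θ • u)) (inner ℝ (g (y + θ • u)) u) θ := by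
    intro θ
    have h1 := (hf (y + θ • u)).hasFDerivAt
    have h2 : HasDerivAt (fun θ : ℝ => y + θ • u) u θ := by
      simpa using ((hasDerivAt_id θ).smul_const u).const_add y
    have := h1.comp_hasDerivAt θ h2
    simp only [InnerProductSpace.toDual_apply_apply] at this
    exact this
  obtain ⟨θ, hθ, he⟩ := exists_hasDerivAt_eq_slope (fun θ : ℝ => f (y + θ • u))
    (fun θ => inner ℝ (g (y + θ • u)) u) zero_lt_one
    (fun θ _ => (hd θ).continuousAt.continuousWithinAt) (fun θ _ => hd θ)
  refine ⟨y + θ • u, ?_, ?_⟩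
  · rw [add_sub_cancel_left, norm_smul, Real.norm_of_nonneg hθ.1.le]
    nlinarith [norm_nonneg u, hθ.2]
  · simp at he
    rw [he]

lemma TS.contra {n : ℕ} {T : Set ℝ} {a b : ℝ} (h : TS T a b) {L : ℝ → En n → En n → ℝ}
    (hLc : ContinuousOn (fun p : ℝ × En n × En n => L p.1 p.2.1 p.2.2)
      (T ×ˢ (univ : Set (En n × En n))))
    {ys yds : ℝ → En n} (hys : C1rd T ys yds) {δ : ℝ}
    (hmin : ∀ y yd : ℝ → En n, C1rd T y yd →
      y b = ys b →
      tsSupNorm (tsTk T) (fun t => y t - ys t)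
        + tsSupNorm (tsTk T) (fun t => yd t - yds t) < δ →
      ∀ F G : ℝ → ℝ,
        IsDeltaAntideriv T (fun t => L t (ys t) (yds t)) F →
        IsDeltaAntideriv T (fun t => L t (y t) (yd t)) G →
        F b - F a ≤ G b - G a)
    {c : ℝ} (hc : c ∈ T) (hac : a < c) (hcb : c < b) (ξ : En n)
    (hnorm : (c - a) ^ 2 * ‖ξ‖ + 2 * (c - a) * ‖ξ‖ < δ)
    (hneg : ∀ t ∈ T, t < c → L t (ys t + ve c t • ξ) (yds t + ved T c t • ξ) < L t (ys t) (yds t)) :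
    False := by
  have hy : C1rd T (fun t => ys t + ve c t • ξ) (fun t => yds t + ved T c t • ξ) :=
    ⟨fun t ht => (hys.1 t ht).add_smul (ve_delta hc t) ξ, hys.2.add_smul (h.ved_rd hc hcb) ξ⟩
  have hm : ∀ x, a ≤ x → vm c x ≤ c - a := fun x hx =>
    (vm_anti c hx).trans (vm_of_le hac.le).le
  have hF := hys.comp_rd hLc
  have hG := hy.comp_rd hLc
  have := hmin _ _ hy ?_ ?_ _ _ (h.antideriv hF) (h.antideriv hG)
  · simp only [intervalIntegral.integral_same, sub_zero] at this
    have iF : ∀ {x y : ℝ}, a ≤ x → a ≤ y → _ := h.intble (h.reg_T hF.regOn)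
    have iG : ∀ {x y : ℝ}, a ≤ x → a ≤ y → _ := h.intble (h.reg_T hG.regOn)
    rw [← intervalIntegral.integral_add_adjacent_intervals (iF le_rfl hac.le) (iF hac.le h.hab.le),
      ← intervalIntegral.integral_add_adjacent_intervals (iG le_rfl hac.le) (iG hac.le h.hab.le)]
      at this
    have heq := intervalIntegral.integral_congr (μ := MeasureTheory.volume) (a := c) (b := b)
      (f := fun r => L (tsPi T r) (ys (tsPi T r) + ve c (tsPi T r) • ξ)
        (yds (tsPi T r) + ved T c (tsPi T r) • ξ))
      (g := fun r => L (tsPi T r) (ys (tsPi T r)) (yds (tsPi T r))) (by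
        intro r hr
        rw [uIcc_of_le hcb.le] at hr
        have h1 := le_tsPi hc hr.1
        have h2 := h1.trans (ts_sigma_ge T _)
        simp [ve, ved, vm_of_ge h1, vm_of_ge h2])
    have hlt := intervalIntegral.intervalIntegral_pos_of_pos_on
      ((iF le_rfl hac.le).sub (iG le_rfl hac.le)) (by
        intro r hr
        have hp := h.pi_mem hr.1.le
        have := hneg _ hp.1 (lt_of_le_of_lt hp.2 hr.2)
        linarith) hac
    have h3 := intervalIntegral.integral_sub (iF le_rfl hac.le) (iG le_rfl hac.le)
    linarith
  · simp [ve, vm_of_ge hcb.le]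
  · refine lt_of_le_of_lt (add_le_add ?_ ?_) hnorm
    · refine Real.sSup_le ?_ (by positivity)
      rintro _ ⟨t, ht, rfl⟩
      have h1 := hm t (h.sub ht.1).1
      have h2 := vm_nonneg c t
      simp only [add_sub_cancel_left, norm_smul, ve]
      rw [Real.norm_of_nonneg (sq_nonneg _)]
      gcongr
    · refine Real.sSup_le ?_ (by have : 0 < c - a := by linarith
                                 positivity)
      rintro _ ⟨t, ht, rfl⟩
      have hat := (h.sub ht.1).1
      have h1 := hm t hat
      have h2 := vm_nonneg c t
      have h3 := hm _ (hat.trans (ts_sigma_ge T t))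
      have h4 := vm_nonneg c (tsSigma T t)
      simp only [add_sub_cancel_left, norm_smul, ved, norm_neg]
      rw [Real.norm_of_nonneg (by positivity)]
      gcongr
      linarith

lemma two_step {n : ℕ} {L : ℝ → En n → En n → ℝ} {Ly Lv : ℝ → En n → En n → En n} {t : ℝ}
    (hLy : ∀ y v : En n, HasGradientAt (fun z => L t z v) (Ly t y v) y)
    (hLv : ∀ y v : En n, HasGradientAt (fun z => L t y z) (Lv t y v) v) (y v u w : En n) :
    ∃ p q, ‖p - y‖ ≤ ‖u‖ ∧ ‖q - v‖ ≤ ‖w‖ ∧ L t (y + u) (v + w) - L t y v =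
      inner ℝ (Ly t p (v + w)) u + inner ℝ (Lv t y q) w := by
  obtain ⟨p, hp, h1⟩ := grad_mvt (fun z => hLy z (v + w)) y u
  obtain ⟨q, hq, h2⟩ := grad_mvt (fun z => hLv y z) v w
  exact ⟨p, q, hp, hq, by linarith⟩

lemma near {n : ℕ} {T : Set ℝ} {A : ℝ → En n → En n → En n} {a : ℝ} (ha : a ∈ T)
    (hA : ContinuousOn (fun p : ℝ × En n × En n => A p.1 p.2.1 p.2.2)
      (T ×ˢ (univ : Set (En n × En n)))) (y v X : En n) {η : ℝ} (hη : 0 < η) :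
    ∃ r > 0, ∀ t ∈ T, |t - a| < r → ∀ p q, ‖p - y‖ < r → ‖q - v‖ < r →
      |inner ℝ (A t p q) X - inner ℝ (A a y v) X| < η := by
  have h1 : ContinuousWithinAt (fun p : ℝ × En n × En n => inner ℝ (A p.1 p.2.1 p.2.2) X)
      (T ×ˢ (univ : Set (En n × En n))) (a, y, v) :=
    ContinuousWithinAt.inner (𝕜 := ℝ) (hA (a, y, v) ⟨ha, mem_univ _⟩) continuousWithinAt_const
  rw [Metric.continuousWithinAt_iff] at h1
  obtain ⟨r, hr, h2⟩ := h1 η hη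
  refine ⟨r, hr, fun t ht hta p q hp hq => ?_⟩
  have := h2 (x := (t, p, q)) ⟨ht, mem_univ _⟩ (by
    rw [Prod.dist_eq, Prod.dist_eq, Real.dist_eq, dist_eq_norm, dist_eq_norm]
    exact max_lt hta (max_lt hp hq))
  rwa [Real.dist_eq] at this

set_option maxHeartbeats 2000000 in
theorem natural_boundary_condition_left_endpoint_free
    {n : ℕ} (hn : 1 ≤ n)
    (T₀ : Set ℝ) (hT₀closed : IsClosed T₀)
    (a b : ℝ) (ha : a ∈ T₀) (hb : b ∈ T₀) (hab : a < b)
    (T : Set ℝ) (hT : T = Icc a b ∩ T₀)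
    (hT3 : ∃ c ∈ T, c ≠ a ∧ c ≠ b)
    (L : ℝ → En n → En n → ℝ) (Ly Lv : ℝ → En n → En n → En n)
    (hLc : ContinuousOn (fun p : ℝ × En n × En n => L p.1 p.2.1 p.2.2)
      (T ×ˢ (univ : Set (En n × En n))))
    (hLC2 : ∀ t ∈ T, ContDiff ℝ 2 (fun p : En n × En n => L t p.1 p.2))
    (hLy : ∀ t ∈ T, ∀ y v : En n, HasGradientAt (fun z => L t z v) (Ly t y v) y)
    (hLv : ∀ t ∈ T, ∀ y v : En n, HasGradientAt (fun z => L t y z) (Lv t y v) v)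
    (hLyc : ContinuousOn (fun p : ℝ × En n × En n => Ly p.1 p.2.1 p.2.2)
      (T ×ˢ (univ : Set (En n × En n))))
    (hLvc : ContinuousOn (fun p : ℝ × En n × En n => Lv p.1 p.2.1 p.2.2)
      (T ×ˢ (univ : Set (En n × En n))))
    (ys yds : ℝ → En n) (hys : C1rd T ys yds)
    (hmin : ∃ δ > 0, ∀ y yd : ℝ → En n, C1rd T y yd →
      y b = ys b →
      tsSupNorm (tsTk T) (fun t => y t - ys t)
        + tsSupNorm (tsTk T) (fun t => yd t - yds t) < δ →
      ∀ F G : ℝ → ℝ,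
        IsDeltaAntideriv T (fun t => L t (ys t) (yds t)) F →
        IsDeltaAntideriv T (fun t => L t (y t) (yd t)) G →
        F b - F a ≤ G b - G a) :
    Lv a (ys a) (yds a) - tsMu T a • Ly a (ys a) (yds a) = 0 := by
  have h : TS T a b := by
    subst hT
    exact ⟨isClosed_Icc.inter hT₀closed, ⟨⟨le_rfl, hab.le⟩, ha⟩, ⟨⟨hab.le, le_rfl⟩, hb⟩, hab,
      inter_subset_left⟩
  obtain ⟨δ, hδ, hmin⟩ := hmin
  by_contra hX0
  set X := Lv a (ys a) (yds a) - tsMu T a • Ly a (ys a) (yds a) with hX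
  have hXpos : 0 < ‖X‖ := norm_pos_iff.2 hX0
  have hXX : inner ℝ (Lv a (ys a) (yds a)) X - tsMu T a * inner ℝ (Ly a (ys a) (yds a)) X
      = ‖X‖ ^ 2 := by
    rw [← real_inner_self_eq_norm_sq, ← real_inner_smul_left, ← inner_sub_left]
  set A₀ : ℝ := inner ℝ (Ly a (ys a) (yds a)) X with hA₀
  set B₀ : ℝ := inner ℝ (Lv a (ys a) (yds a)) X with hB₀
  obtain ⟨c', hc'T, hc'a, hc'b⟩ := hT3
  have hac' : a < c' := lt_of_le_of_ne (h.sub hc'T).1 (Ne.symm hc'a)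
  have hcb' : c' < b := lt_of_le_of_ne (h.sub hc'T).2 hc'b
  have hσ := ts_sigma_ge T a
  have hform : ∀ t ∈ T, ∀ c s : ℝ, ∃ p q, ‖p - ys t‖ ≤ ‖ve c t • s • X‖ ∧
      ‖q - yds t‖ ≤ ‖ved T c t • s • X‖ ∧
      L t (ys t + ve c t • s • X) (yds t + ved T c t • s • X) - L t (ys t) (yds t) =
      s * (ve c t * inner ℝ (Ly t p (yds t + ved T c t • s • X)) X
        + ved T c t * inner ℝ (Lv t (ys t) q) X) := by
    intro t ht c s
    obtain ⟨p, q, hp, hq, he⟩ := two_step (hLy t ht) (hLv t ht) (ys t) (yds t)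
      (ve c t • s • X) (ved T c t • s • X)
    refine ⟨p, q, hp, hq, ?_⟩
    rw [he]
    simp only [real_inner_smul_right]
    ring
  rcases hσ.eq_or_lt with he | hlt
  · -- right-dense
    have hmu : tsMu T a = 0 := by unfold tsMu; linarith
    rw [hmu, zero_mul, sub_zero] at hXX
    set κ : ℝ := ‖X‖ ^ 2 / 2 with hκ
    have hκpos : 0 < κ := by positivity
    obtain ⟨r₁, hr₁, hn1⟩ := near h.ha hLyc (ys a) (yds a) X hκpos
    obtain ⟨r₂, hr₂, hn2⟩ := near h.ha hLvc (ys a) (yds a) X hκpos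
    set r := min r₁ r₂ with hr
    have hrpos : 0 < r := lt_min hr₁ hr₂
    have hr1 : r ≤ r₁ := min_le_left _ _
    have hr2 : r ≤ r₂ := min_le_right _ _
    have hak := h.mem_tk h.ha hab
    have hcy := (hys.1 a hak).cont h.ha
    have hcyd := (hys.2 a hak).1 (h.sigma_tk hak he.symm)
    rw [Metric.continuousWithinAt_iff] at hcy hcyd
    obtain ⟨d₁, hd₁, hcy⟩ := hcy (r / 2) (by positivity)
    obtain ⟨d₂, hd₂, hcyd⟩ := hcyd (r / 2) (by positivity)
    set M : ℝ := |A₀| + κ with hM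
    have hMpos : 0 < M := by positivity
    set ω : ℝ := min δ (r / 2) with hω
    have hωpos : 0 < ω := lt_min hδ (by positivity)
    obtain ⟨c, hcT, hac, hcl⟩ := ts_right_dense h.hb hab he.symm
      (x := min b (a + min (min d₁ d₂) (min (min 1 r) (min (κ / M) (ω / (3 * ‖X‖ + 1))))))
      (lt_min hab (lt_add_of_pos_right _ (by positivity)))
    obtain ⟨hcb, hcl⟩ := lt_min_iff.1 hcl
    have hcl : c - a < min (min d₁ d₂) (min (min 1 r) (min (κ / M) (ω / (3 * ‖X‖ + 1)))) := by
      linarith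
    simp only [lt_min_iff] at hcl
    obtain ⟨⟨l1, l2⟩, ⟨l3, l4⟩, l5, l6⟩ := hcl
    rw [lt_div_iff₀ hMpos] at l5
    rw [lt_div_iff₀ (by positivity)] at l6
    have hca : 0 < c - a := by linarith
    have hsq : (c - a) ^ 2 ≤ c - a := by nlinarith
    have hsqX : (c - a) ^ 2 * ‖X‖ ≤ (c - a) * ‖X‖ := by gcongr
    have hnorm : (c - a) ^ 2 * ‖X‖ + 2 * (c - a) * ‖X‖ < ω := by nlinarith
    have hωδ : ω ≤ δ := min_le_left _ _
    have hωr : ω ≤ r / 2 := min_le_right _ _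
    refine h.contra hLc hys hmin hcT hac hcb X (by linarith) ?_
    intro t ht htc
    obtain ⟨p, q, hp, hq, hE⟩ := hform t ht c 1
    rw [one_smul] at hp hq hE
    have hat := (h.sub ht).1
    have htk := h.mem_tk ht (htc.trans hcb)
    have hta : |t - a| < c - a := by rw [abs_of_nonneg (by linarith)]; linarith
    have g1 := hcy ht (by rw [Real.dist_eq]; linarith)
    have g2 := hcyd htk (by rw [Real.dist_eq]; linarith)
    rw [dist_eq_norm] at g1 g2
    have m1 : vm c t = c - t := vm_of_le htc.le
    have m2 : 0 ≤ vm c (tsSigma T t) := vm_nonneg _ _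
    have m3 : vm c (tsSigma T t) ≤ vm c t := vm_anti c (ts_sigma_ge T t)
    have n1 : ‖ve c t • X‖ ≤ (c - a) ^ 2 * ‖X‖ := by
      rw [norm_smul]
      unfold ve
      rw [m1, Real.norm_of_nonneg (sq_nonneg _)]
      have : 0 ≤ c - t := by linarith
      gcongr
    have n2 : ‖ved T c t • X‖ ≤ 2 * (c - a) * ‖X‖ := by
      rw [norm_smul]
      unfold ved
      rw [norm_neg, Real.norm_of_nonneg (by linarith)]
      gcongr
      linarith
    have pos1 : 0 ≤ (c - a) ^ 2 * ‖X‖ := by positivity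
    have pos2 : 0 ≤ 2 * (c - a) * ‖X‖ := by positivity
    have k1 : ‖p - ys a‖ < r := by
      have := norm_sub_le_norm_sub_add_norm_sub p (ys t) (ys a)
      linarith
    have k2 : ‖q - yds a‖ < r := by
      have := norm_sub_le_norm_sub_add_norm_sub q (yds t) (yds a)
      linarith
    have k3 : ‖yds t + ved T c t • X - yds a‖ < r := by
      have : yds t + ved T c t • X - yds a = (yds t - yds a) + ved T c t • X := by abel
      rw [this]
      have := norm_add_le (yds t - yds a) (ved T c t • X)
      linarith
    have q1 := hn1 t ht (by linarith) p (yds t + ved T c t • X) (by linarith) (by linarith)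
    have q2 := hn2 t ht (by linarith) (ys t) q (by linarith) (by linarith)
    rw [← hA₀] at q1
    rw [← hB₀] at q2
    set α : ℝ := inner ℝ (Ly t p (yds t + ved T c t • X)) X
    set β : ℝ := inner ℝ (Lv t (ys t) q) X
    have q3 : α ≤ M := by linarith [(abs_lt.1 q1).2, le_abs_self A₀]
    have q4 : κ ≤ β := by linarith [(abs_lt.1 q2).1]
    unfold ve ved at hE ⊢
    set m := vm c t
    set m' := vm c (tsSigma T t)
    have mpos : 0 < m := by linarith
    have w1 : m ^ 2 * α ≤ m ^ 2 * M := by gcongr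
    have w2 : (m + m') * κ ≤ (m + m') * β := by gcongr
    have w3 : m * M < κ := by
      have : m * M ≤ (c - a) * M := by gcongr; linarith
      linarith
    have w4 : m * (m * M) < m * κ := by gcongr
    have w5 : 0 ≤ m' * κ := by positivity
    linarith
  · -- right-scattered
    have hmu : tsMu T a = tsSigma T a - a := rfl
    set c := tsSigma T a with hc
    set μ := tsMu T a
    have hμ : 0 < μ := by linarith
    have hcT : c ∈ T := by
      have hne : ({s | s ∈ T ∧ a < s}).Nonempty := ⟨b, h.hb, hab⟩
      have h1 : c = sInf {s | s ∈ T ∧ a < s} := by rw [hc]; unfold tsSigma; rw [if_pos hne]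
      have h2 := csInf_mem_closure hne ⟨a, fun x hx => hx.2.le⟩
      rw [← h1] at h2
      have h3 := closure_mono (s := {s | s ∈ T ∧ a < s}) (t := T) (fun x hx => hx.1) h2
      rwa [h.closed.closure_eq] at h3
    have hcb : c < b := (ts_sigma_le hc'T hac').trans_lt hcb'
    have hη : 0 < ‖X‖ ^ 2 / (2 * (μ + 1)) := by positivity
    obtain ⟨r₁, hr₁, hn1⟩ := near h.ha hLyc (ys a) (yds a) X hη
    obtain ⟨r₂, hr₂, hn2⟩ := near h.ha hLvc (ys a) (yds a) X hη
    set η := ‖X‖ ^ 2 / (2 * (μ + 1)) with hη'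
    have hηX : (μ + 1) * η < ‖X‖ ^ 2 := by
      have : (μ + 1) * η = ‖X‖ ^ 2 / 2 := by rw [hη']; field_simp
      rw [this]
      have : 0 < ‖X‖ ^ 2 := by positivity
      linarith
    set ω := min δ (min r₁ r₂) with hω
    have hωpos : 0 < ω := lt_min hδ (lt_min hr₁ hr₂)
    have o1 : ω ≤ δ := min_le_left _ _
    have o2 : ω ≤ r₁ := (min_le_right _ _).trans (min_le_left _ _)
    have o3 : ω ≤ r₂ := (min_le_right _ _).trans (min_le_right _ _)
    set K := (μ ^ 2 + 2 * μ) * ‖X‖ with hK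
    have hKpos : 0 < K := by positivity
    set s := ω / (K + 1) with hs
    have hspos : 0 < s := by positivity
    have hsK : s * K < ω := by
      rw [hs, div_mul_eq_mul_div, div_lt_iff₀ (by positivity)]
      nlinarith
    have hsX : ‖s • X‖ = s * ‖X‖ := by rw [norm_smul, Real.norm_of_nonneg hspos.le]
    refine h.contra hLc hys hmin hcT hlt hcb (s • X) ?_ ?_
    · rw [← hmu, hsX]
      have : μ ^ 2 * (s * ‖X‖) + 2 * μ * (s * ‖X‖) = s * K := by rw [hK]; ring
      linarith
    · intro t ht htc
      have hta : t = a := by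
        rcases (h.sub ht).1.eq_or_lt with e | e
        · exact e.symm
        · exact absurd (ts_sigma_le ht e) (not_le.2 htc)
      subst hta
      obtain ⟨p, q, hp, hq, hE⟩ := hform t ht c s
      have e1 : ve c t = μ ^ 2 := by unfold ve; rw [vm_of_le htc.le, hmu]
      have e2 : ved T c t = -μ := by
        unfold ved; rw [vm_of_le htc.le, ← hc, vm_of_ge le_rfl, hmu, add_zero]
      rw [e1] at hp
      rw [e2] at hq
      rw [norm_smul, hsX, Real.norm_of_nonneg (by positivity)] at hp
      have hw : ‖(-μ) • s • X‖ = μ * (s * ‖X‖) := by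
        rw [norm_smul, hsX, norm_neg, Real.norm_of_nonneg hμ.le]
      rw [hw] at hq
      have p1 : 0 ≤ μ ^ 2 * (s * ‖X‖) := by positivity
      have p2 : 0 < μ * (s * ‖X‖) := by positivity
      have p3 : s * K = μ ^ 2 * (s * ‖X‖) + 2 * (μ * (s * ‖X‖)) := by rw [hK]; ring
      have q1 := hn1 t ht (by simpa using hr₁) p (yds t + ved T c t • s • X) (by linarith) (by
        rw [add_sub_cancel_left, e2, hw]; linarith)
      have q2 := hn2 t ht (by simpa using hr₂) (ys t) q (by simpa using hr₂) (by linarith)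
      rw [← hA₀] at q1
      rw [← hB₀] at q2
      set α : ℝ := inner ℝ (Ly t p (yds t + ved T c t • s • X)) X
      set β : ℝ := inner ℝ (Lv t (ys t) q) X
      have w1 : μ * α ≤ μ * (A₀ + η) := by
        gcongr
        linarith [(abs_lt.1 q1).2]
      have w2 : μ * α - β < 0 := by linarith [(abs_lt.1 q2).1]
      have w3 : s * (μ ^ 2 * α + -μ * β) = s * μ * (μ * α - β) := by ring
      rw [e1, e2, w3] at hE
      rw [e1, e2]
      have := mul_neg_of_pos_of_neg (mul_pos hspos hμ) w2
      linarith
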